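/- arXiv:2012.12897 — 2 statements merged into one kernel-verified Lean document; each statement's English description precedes it below -/
import Mathlib

section
/- Let G be a graph with a feedback vertex set of size one (i.e., there is a vertex whose deletion leaves a forest). Then there exist N ∈ ℕ and a polynomial p(m) such that the DP color function satisfies P_DP(G, m) = p(m) for all m ≥ N. -/
/-- An `m`-fold cover of `G`, presented on the vertex set `V × Fin m` with lists
`L v = {v} × Fin m`: each list is a clique, cross-edges join only lists of
adjacent vertices of `G`, and the cross-edges between two lists form a matching. -/
structure IsDPCover {V : Type*} (G : SimpleGraph V) (m : ℕ)
    (H : SimpleGraph (V × Fin m)) : Prop where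
  listClique : ∀ (v : V) (j j' : Fin m), j ≠ j' → H.Adj (v, j) (v, j')
  cross : ∀ (u v : V) (j j' : Fin m), u ≠ v → H.Adj (u, j) (v, j') → G.Adj u v
  matching₁ : ∀ (u v : V) (j j₁ j₂ : Fin m), u ≠ v →
    H.Adj (u, j) (v, j₁) → H.Adj (u, j) (v, j₂) → j₁ = j₂
  matching₂ : ∀ (u v : V) (j₁ j₂ j : Fin m), u ≠ v →
    H.Adj (u, j₁) (v, j) → H.Adj (u, j₂) (v, j) → j₁ = j₂

/-- The number of `H`-colorings: independent transversals of the cover `H`,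
recorded as functions picking one vertex from each list. -/
noncomputable def coverColorings {V : Type*} (m : ℕ) (H : SimpleGraph (V × Fin m)) : ℕ :=
  Nat.card {f : V → Fin m // ∀ u v : V, ¬ H.Adj (u, f u) (v, f v)}

/-- The DP color function `P_DP(G, m)`: the minimum number of `H`-colorings over
all `m`-fold covers `H` of `G`. -/
noncomputable def dpColorFunction {V : Type*} (G : SimpleGraph V) (m : ℕ) : ℕ :=
  sInf {n | ∃ H : SimpleGraph (V × Fin m), IsDPCover G m H ∧ n = coverColorings m H}

/-
Deleting `v₀` leaves a forest, on which the matchings of a cover can be made trivial by permuting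
the lists. Each color `c` of `v₀` then forbids one color `x u` at every neighbor `u` of `v₀`, so
the number of `H`-colorings is at least a sum over `c` of numbers `N x` of colorings of the forest
avoiding `x`. Matching `c` at `v₀` to `b u + c` at `u` makes all summands equal to `N b`; hence
`P_DP(G, m) = m * min N`. By symmetry of the colors, `N x` is a polynomial in `m` that depends
only on the kernel of `x`, and among the finitely many polynomials arising from the kernels one is
smallest for all large `m`.
-/

open Polynomial Filter Equiv

section EventuallyMinimal

theorem eventually_eval_natCast_nonneg {q : ℤ[X]} (hq : 0 ≤ q.leadingCoeff) :
    ∀ᶠ m : ℕ in atTop, 0 ≤ q.eval (m : ℤ) := by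
  rcases le_or_gt q.degree 0 with hdeg | hdeg
  · rw [eq_C_of_degree_le_zero hdeg, leadingCoeff_C] at hq
    rw [eq_C_of_degree_le_zero hdeg]
    simpa only [eval_C] using .of_forall fun _ => hq
  · have htop : Tendsto (fun x : ℝ => (q.map (Int.castRingHom ℝ)).eval x) atTop atTop :=
      tendsto_atTop_of_leadingCoeff_nonneg _
        (by rwa [degree_map_eq_of_injective (RingHom.injective_int _)])
        (by simpa [leadingCoeff_map_of_injective (RingHom.injective_int (Int.castRingHom ℝ))]
          using hq)
    filter_upwards [(htop.comp tendsto_natCast_atTop_atTop).eventually_ge_atTop 0] with m hm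
    simpa [eval_natCast_map] using hm

theorem eventuallyLE_total_eval_natCast (p q : ℤ[X]) :
    (fun m : ℕ => p.eval (m : ℤ)) ≤ᶠ[atTop] (fun m : ℕ => q.eval (m : ℤ)) ∨
      (fun m : ℕ => q.eval (m : ℤ)) ≤ᶠ[atTop] (fun m : ℕ => p.eval (m : ℤ)) := by
  have le_of_leadingCoeff {p q : ℤ[X]} (h : 0 ≤ (q - p).leadingCoeff) :
      (fun m : ℕ => p.eval (m : ℤ)) ≤ᶠ[atTop] (fun m : ℕ => q.eval (m : ℤ)) := by
    filter_upwards [eventually_eval_natCast_nonneg h] with m hm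
    rwa [eval_sub, sub_nonneg] at hm
  refine (le_total 0 (q - p).leadingCoeff).imp le_of_leadingCoeff fun h => le_of_leadingCoeff ?_
  rwa [← neg_sub, leadingCoeff_neg, neg_nonneg]

theorem exists_eventually_forall_eval_natCast_le {ι : Type*} [Finite ι] [Nonempty ι]
    (p : ι → ℤ[X]) :
    ∃ i, ∀ᶠ m : ℕ in atTop, ∀ j, (p i).eval (m : ℤ) ≤ (p j).eval (m : ℤ) := by
  let F (i : ι) (m : ℕ) : ℤ := (p i).eval (m : ℤ)
  have : IsTrans (ℕ → ℤ) fun f g => g ≤ᶠ[atTop] f := ⟨fun _ _ _ hfg hgh => hgh.trans hfg⟩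
  have directed_F : Directed (fun f g => g ≤ᶠ[atTop] f) F := fun i j =>
    (eventuallyLE_total_eval_natCast (p i) (p j)).elim
      (fun h => ⟨i, .rfl, h⟩) (fun h => ⟨j, h, .rfl⟩)
  obtain ⟨i, hi⟩ := directed_F.finite_le id
  exact ⟨i, eventually_all.mpr hi⟩

end EventuallyMinimal

section KernelCounting

theorem card_embedding_extending {A B C : Type*} [Finite B] [Finite C] (j : A ↪ B) (k : A ↪ C) :
    Nat.card {f : B ↪ C // j.trans f = k} =
      (Nat.card C - Nat.card A).descFactorial (Nat.card B - Nat.card A) := by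
  classical
  have := Fintype.ofFinite B
  have := Fintype.ofFinite C
  have : Fintype A := Fintype.ofInjective j j.injective
  let splitB : A ⊕ ↥(Set.range j)ᶜ ≃ B :=
    (sumCongr (ofInjective j j.injective) (Equiv.refl _)).trans (Set.sumCompl (Set.range j))
  let restrict : (B ↪ C) ≃ Σ k' : A ↪ C, ↥(Set.range j)ᶜ ↪ ↥(Set.range k')ᶜ :=
    (embeddingCongr splitB.symm (Equiv.refl C)).trans sumEmbeddingEquivSigmaEmbeddingRestricted
  have restrict_fst (f : B ↪ C) : (restrict f).1 = j.trans f := rfl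
  let e : {f : B ↪ C // j.trans f = k} ≃ (↥(Set.range j)ᶜ ↪ ↥(Set.range k)ᶜ) :=
    (restrict.subtypeEquiv fun f => by rw [restrict_fst]).trans (sigmaSubtype k)
  rw [Nat.card_congr e, Nat.card_eq_fintype_card, Fintype.card_embedding_eq,
    Fintype.card_compl_set, Fintype.card_compl_set, Set.card_range_of_injective j.injective,
    Set.card_range_of_injective k.injective]
  simp only [Nat.card_eq_fintype_card]

variable {X Y : Type*} (i : X → Y)

theorem card_extension_ker_eq {C : Type*} [Finite Y] [Finite C] (s : Setoid Y) {x : X → C}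
    (hx : Setoid.ker x = s.comap i) :
    Nat.card {f : Y → C // f ∘ i = x ∧ Setoid.ker f = s} =
      (Nat.card C - Nat.card (Quotient (s.comap i))).descFactorial
        (Nat.card (Quotient s) - Nat.card (Quotient (s.comap i))) := by
  let j : Quotient (s.comap i) ↪ Quotient s :=
    ⟨Quotient.map' i fun _ _ h => h, by
      rintro ⟨a⟩ ⟨b⟩ h
      exact Quotient.sound' (Quotient.exact' h :)⟩
  let k : Quotient (s.comap i) ↪ C :=
    ⟨Quotient.lift x fun a b h => by rwa [← Setoid.ker_def, hx], by
      rintro ⟨a⟩ ⟨b⟩ h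
      exact Quotient.sound (by rwa [← hx])⟩
  let e : {f : Y → C // f ∘ i = x ∧ Setoid.ker f = s} ≃ {f : Quotient s ↪ C // j.trans f = k} :=
    { toFun f := ⟨⟨Quotient.lift f.1 fun a b h => by rwa [← Setoid.ker_def, f.2.2], by
          rintro ⟨a⟩ ⟨b⟩ h
          exact Quotient.sound (by rwa [← f.2.2])⟩, by
        ext ⟨a⟩
        exact congrFun f.2.1 a⟩
      invFun f := ⟨fun a => f.1 ⟦a⟧, funext fun a => DFunLike.congr_fun f.2 ⟦a⟧, by
        ext a b
        rw [Setoid.ker_def, f.1.injective.eq_iff, Quotient.eq]⟩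
      left_inv f := rfl
      right_inv f := by
        ext ⟨a⟩
        rfl }
  rw [Nat.card_congr e, card_embedding_extending]

instance [Finite Y] : Finite (Setoid Y) :=
  .of_injective (fun (s : Setoid Y) a b => s a b) fun _ _ h =>
    Setoid.ext fun a b => iff_of_eq (congrFun₂ h a b)

theorem exists_polynomial_card_extension [Finite Y] (P : Setoid Y → Prop) (r : Setoid X) :
    ∃ p : ℤ[X], ∀ (C : Type*) [Finite C] (x : X → C), Setoid.ker x = r →
      (Nat.card {f : Y → C // f ∘ i = x ∧ P (Setoid.ker f)} : ℤ) = p.eval (Nat.card C : ℤ) := by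
  have := Fintype.ofFinite {s // P s ∧ s.comap i = r}
  refine ⟨∑ s : {s // P s ∧ s.comap i = r},
    (descPochhammer ℤ (Nat.card (Quotient s.1) - Nat.card (Quotient r))).comp
      (Polynomial.X - Polynomial.C (Nat.card (Quotient r) : ℤ)), fun C _ x hx => ?_⟩
  have hrC : Nat.card (Quotient r) ≤ Nat.card C :=
    hx ▸ Nat.card_le_card_of_injective _ (Setoid.kerLift_injective x)
  have ker_mem (f : {f : Y → C // f ∘ i = x}) :
      P (Setoid.ker f.1) ↔ P (Setoid.ker f.1) ∧ (Setoid.ker f.1).comap i = r := by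
    obtain ⟨f, rfl⟩ := f
    exact (and_iff_left hx).symm
  have fiberwise := Nat.card_congr <|
    (sigmaSubtypeFiberEquivSubtype (q := fun s => P s ∧ s.comap i = r)
      (fun f : {f : Y → C // f ∘ i = x} => Setoid.ker f.1) ker_mem).trans
      (subtypeSubtypeEquivSubtypeInter _ fun f => P (Setoid.ker f))
  rw [← fiberwise, Nat.card_sigma, eval_finsetSum, Nat.cast_sum]
  refine Finset.sum_congr rfl fun s _ => ?_
  obtain ⟨s, -, rfl⟩ := s
  rw [Nat.card_congr (subtypeSubtypeEquivSubtypeInter _ fun f => Setoid.ker f = s),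
    card_extension_ker_eq i s hx, eval_comp, eval_sub, eval_X, eval_C, ← Nat.cast_sub hrC,
    descPochhammer_eval_eq_descFactorial]

theorem exists_ker_eq_of_card_quotient_le {C : Type*} [Finite Y] [Finite C] (s : Setoid Y)
    (h : Nat.card (Quotient s) ≤ Nat.card C) : ∃ f : Y → C, Setoid.ker f = s := by
  have := Fintype.ofFinite (Quotient s)
  have := Fintype.ofFinite C
  obtain ⟨k⟩ : Nonempty (Quotient s ↪ C) :=
    Function.Embedding.nonempty_of_card_le (by simpa only [Nat.card_eq_fintype_card] using h)
  refine ⟨fun a => k ⟦a⟧, ?_⟩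
  ext a b
  rw [Setoid.ker_def, k.injective.eq_iff, Quotient.eq]

end KernelCounting

section Potential

theorem exists_potential_of_isAcyclic {W M : Type*} [Monoid M] {T : SimpleGraph W}
    (hT : T.IsAcyclic) (σ : W → W → M) :
    ∃ τ : W → M, ∀ u v, T.Adj u v → τ v = τ u * σ u v ∨ τ u = τ v * σ v u := by
  let gain {a b : W} (p : T.Walk a b) : M := (p.darts.map fun d => σ d.fst d.snd).prod
  have gain_concat {a b c : W} (p : T.Walk a b) (h : T.Adj b c) :
      gain (p.concat h) = gain p * σ b c := by
    simp [gain, SimpleGraph.Walk.darts_concat]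
  let root (w : W) : W := (T.connectedComponentMk w).out
  have reachable_root (w : W) : T.Reachable (root w) w :=
    SimpleGraph.ConnectedComponent.exact (Quot.out_eq _)
  choose path isPath_path using fun w => (reachable_root w).exists_isPath
  refine ⟨fun w => gain (path w), fun u v huv => ?_⟩
  have hroot : root v = root u :=
    congrArg Quot.out (SimpleGraph.ConnectedComponent.sound huv.symm.reachable)
  let q : T.Walk (root u) v := (path v).copy hroot rfl
  have isPath_q : q.IsPath := (SimpleGraph.Walk.isPath_copy ..).mpr (isPath_path v)
  have gain_q : gain q = gain (path v) := by simp [gain, q]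
  beta_reduce
  rw [← gain_q]
  by_cases hv : v ∈ (path u).support
  · right
    rw [hT.path_concat isPath_q (isPath_path u) huv.symm hv, gain_concat]
  · left
    have hu := hT.mem_support_of_ne_mem_support_of_adj_of_isPath isPath_q (isPath_path u)
      huv.symm hv
    rw [hT.path_concat (isPath_path u) isPath_q huv hu, gain_concat]

end Potential

section Cover

variable {V : Type*} {G : SimpleGraph V} {m : ℕ} {v₀ : V}

/-- The proper `C`-colorings of `G` with the vertex `v₀` deleted in which no neighbor `u` of `v₀`
receives the color `x u`. For simplicity `x` is defined on all of `V`. -/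
def avoidingColorings {C : Type*} (G : SimpleGraph V) (v₀ : V) (x : V → C) :
    Set ({u // u ≠ v₀} → C) :=
  {g | (∀ u v, G.Adj u.1 v.1 → g u ≠ g v) ∧ ∀ u, G.Adj v₀ u.1 → g u ≠ x u.1}

theorem ncard_avoidingColorings_comp {C : Type*} (e : Perm C) (x : V → C) :
    (avoidingColorings G v₀ (e ∘ x)).ncard = (avoidingColorings G v₀ x).ncard :=
  (Nat.card_congr <| (Equiv.arrowCongr (Equiv.refl _) e).subtypeEquiv fun g => by
    simp [avoidingColorings]).symm

theorem exists_polynomial_ncard_avoidingColorings [Finite V] (G : SimpleGraph V) (v₀ : V)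
    (r : Setoid V) :
    ∃ p : ℤ[X], ∀ (C : Type*) [Finite C] (x : V → C), Setoid.ker x = r →
      ((avoidingColorings G v₀ x).ncard : ℤ) = p.eval (Nat.card C : ℤ) := by
  let P (s : Setoid (V ⊕ {u // u ≠ v₀})) : Prop :=
    (∀ u v : {u // u ≠ v₀}, G.Adj u.1 v.1 → ¬ s (.inr u) (.inr v)) ∧
      ∀ u : {u // u ≠ v₀}, G.Adj v₀ u.1 → ¬ s (.inr u) (.inl u.1)
  obtain ⟨p, hp⟩ := exists_polynomial_card_extension Sum.inl P r
  refine ⟨p, fun C _ x hx => ?_⟩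
  let e : avoidingColorings G v₀ x ≃
      {f : V ⊕ {u // u ≠ v₀} → C // f ∘ Sum.inl = x ∧ P (Setoid.ker f)} :=
    { toFun g := ⟨Sum.elim x g.1, rfl, g.2⟩
      invFun f := ⟨f.1 ∘ Sum.inr, f.2.2.1, fun u hu h =>
        f.2.2.2 u hu (h.trans (congrFun f.2.1 u.1).symm)⟩
      left_inv g := rfl
      right_inv := by
        rintro ⟨f, rfl, hf⟩
        exact Subtype.ext (Sum.elim_comp_inl_inr f) }
  rw [← hp C x hx, ← Nat.card_congr e, Nat.card_coe_set_eq]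

/-- The cover of `G` in which, for adjacent `u` and `v`, the color `j` of `u` is matched to the
color `j'` of `v` when `σ u v j = σ v u j'`. -/
def permutationCover (G : SimpleGraph V) (σ : V → V → Perm (Fin m)) :
    SimpleGraph (V × Fin m) where
  Adj p q := (p.1 = q.1 ∧ p.2 ≠ q.2) ∨ (G.Adj p.1 q.1 ∧ σ p.1 q.1 p.2 = σ q.1 p.1 q.2)
  symm := ⟨fun _ _ h => h.imp (.imp Eq.symm Ne.symm) (.imp SimpleGraph.Adj.symm Eq.symm)⟩
  loopless := ⟨fun _ h => h.elim (fun h => h.2 rfl) fun h => G.irrefl h.1⟩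

theorem isDPCover_permutationCover (σ : V → V → Perm (Fin m)) :
    IsDPCover G m (permutationCover G σ) where
  listClique _ _ _ h := .inl ⟨rfl, h⟩
  cross _ _ _ _ huv h := (h.resolve_left fun h => huv h.1).1
  matching₁ u v _ _ _ huv h₁ h₂ := (σ v u).injective <|
    (h₁.resolve_left fun h => huv h.1).2.symm.trans (h₂.resolve_left fun h => huv h.1).2
  matching₂ u v _ _ _ huv h₁ h₂ := (σ u v).injective <|
    (h₁.resolve_left fun h => huv h.1).2.trans (h₂.resolve_left fun h => huv h.1).2.symm

theorem forall_not_permutationCover_adj_iff {σ : V → V → Perm (Fin m)} {f : V → Fin m} :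
    (∀ u v, ¬ (permutationCover G σ).Adj (u, f u) (v, f v)) ↔
      ∀ u v, G.Adj u v → σ u v (f u) ≠ σ v u (f v) := by
  refine forall₂_congr fun u v => ⟨fun h huv heq => h (.inr ⟨huv, heq⟩), fun h => ?_⟩
  rintro (⟨rfl, hne⟩ | ⟨huv, heq⟩)
  · exact hne rfl
  · exact h huv heq

open Classical in
/-- The cover of `G` in which the color `c` of `v₀` is matched to the color `j` of a neighbor `u`
when `y u c = τ u j`, and in which all matchings away from `v₀` become trivial after relabelling
the lists by `τ`. -/
noncomputable def starCover (G : SimpleGraph V) (v₀ : V) (τ y : V → Perm (Fin m)) :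
    SimpleGraph (V × Fin m) :=
  permutationCover G (Function.update (fun u _ => τ u) v₀ y)

theorem forall_not_starCover_adj_iff {τ y : V → Perm (Fin m)} {f : V → Fin m} :
    (∀ u v, ¬ (starCover G v₀ τ y).Adj (u, f u) (v, f v)) ↔
      (fun u : {u // u ≠ v₀} => τ u.1 (f u.1)) ∈
        avoidingColorings G v₀ fun u => y u (f v₀) := by
  rw [starCover, forall_not_permutationCover_adj_iff]
  constructor
  · refine fun h => ⟨fun u v huv => ?_, fun u hu => ?_⟩
    · simpa [u.2, v.2] using h u.1 v.1 huv
    · simpa [u.2] using h u.1 v₀ hu.symm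
  · rintro ⟨hforest, hstar⟩ u v huv
    by_cases hu : u = v₀
    · subst hu
      simpa [huv.ne'] using (hstar ⟨v, huv.ne'⟩ huv).symm
    by_cases hv : v = v₀
    · subst hv
      simpa [hu] using hstar ⟨u, hu⟩ huv.symm
    simpa [hu, hv] using hforest ⟨u, hu⟩ ⟨v, hv⟩ huv

theorem coverColorings_starCover [Finite V] (τ y : V → Perm (Fin m)) :
    coverColorings m (starCover G v₀ τ y) =
      ∑ c, (avoidingColorings G v₀ fun u => y u c).ncard := by
  classical
  let Φ : (V → Fin m) ≃ Fin m × ({u // u ≠ v₀} → Fin m) :=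
    (funSplitAt v₀ (Fin m)).trans
      (prodCongr (Equiv.refl _) (piCongrRight fun u : {u // u ≠ v₀} => τ u.1))
  let e := (Φ.subtypeEquiv fun f => forall_not_starCover_adj_iff (G := G) (τ := τ) (y := y)).trans
    (subtypeProdEquivSigmaSubtype fun c g => g ∈ avoidingColorings G v₀ fun u => y u c)
  rw [coverColorings, Nat.card_congr e, Nat.card_sigma]
  rfl

theorem coverColorings_anti [Finite V] {H H' : SimpleGraph (V × Fin m)} (h : H ≤ H') :
    coverColorings m H' ≤ coverColorings m H :=
  Nat.card_le_card_of_injective _ <|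
    Subtype.map_injective (fun _ hf u v hadj => hf u v (h hadj)) Function.injective_id

namespace IsDPCover

variable {H : SimpleGraph (V × Fin m)}

theorem exists_perm (hH : IsDPCover G m H) (u v : V) :
    ∃ e : Perm (Fin m), u ≠ v → ∀ j j', H.Adj (u, j) (v, j') → e j = j' := by
  rcases eq_or_ne u v with heq | huv
  · exact ⟨1, fun hne => absurd heq hne⟩
  let matching := {p : Fin m × Fin m // H.Adj (u, p.1) (v, p.2)}
  have fst_injective : Function.Injective fun p : matching => p.1.1 := by
    rintro ⟨⟨j, j₁⟩, h₁⟩ ⟨⟨_, j₂⟩, h₂⟩ h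
    obtain rfl : j = _ := h
    obtain rfl := hH.matching₁ u v j j₁ j₂ huv h₁ h₂
    rfl
  have snd_injective : Function.Injective fun p : matching => p.1.2 := by
    rintro ⟨⟨j₁, j⟩, h₁⟩ ⟨⟨j₂, _⟩, h₂⟩ h
    obtain rfl : j = _ := h
    obtain rfl := hH.matching₂ u v j₁ j₂ j huv h₁ h₂
    rfl
  obtain ⟨e, he⟩ := Perm.exists_extending_pair _ _ fst_injective snd_injective
  exact ⟨e, fun _ j j' h => he ⟨(j, j'), h⟩⟩

theorem exists_relabelling (hH : IsDPCover G m H) {s : Set V} (hs : (G.induce s).IsAcyclic) :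
    ∃ τ : V → Perm (Fin m), ∀ u ∈ s, ∀ v ∈ s, u ≠ v → ∀ j j', H.Adj (u, j) (v, j') →
      τ u j = τ v j' := by
  choose σ hσ using hH.exists_perm
  obtain ⟨τ, hτ⟩ := exists_potential_of_isAcyclic hs fun u v => σ v.1 u.1
  refine ⟨Function.extend Subtype.val τ 1, fun u hu v hv huv j j' h => ?_⟩
  lift u to s using hu
  lift v to s using hv
  rw [Subtype.val_injective.extend_apply, Subtype.val_injective.extend_apply]
  rcases hτ u v (hH.cross _ _ _ _ huv h) with heq | heq
  · rw [heq, Perm.mul_apply, hσ v u (Ne.symm huv) j' j h.symm]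
  · rw [heq, Perm.mul_apply, hσ u v huv j j' h]

theorem exists_le_starCover (hH : IsDPCover G m H)
    (hv₀ : (G.induce {u | u ≠ v₀}).IsAcyclic) :
    ∃ τ y : V → Perm (Fin m), H ≤ starCover G v₀ τ y := by
  obtain ⟨τ, hτ⟩ := hH.exists_relabelling hv₀
  choose e he using hH.exists_perm v₀
  refine ⟨τ, fun u => τ u * e u, ?_⟩
  rintro ⟨u, j⟩ ⟨v, j'⟩ h
  by_cases huv : u = v
  · subst huv
    exact .inl ⟨rfl, fun hj => h.ne (congrArg _ hj)⟩
  refine .inr ⟨hH.cross _ _ _ _ huv h, ?_⟩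
  by_cases hu : u = v₀
  · subst hu
    simp [Ne.symm huv, he v huv j j' h]
  by_cases hv : v = v₀
  · subst hv
    simp [huv, he u (Ne.symm huv) j' j h.symm]
  simp [hu, hv, hτ u hu v hv huv j j' h]

end IsDPCover

theorem dpColorFunction_eq_mul_iInf_ncard [Finite V] [NeZero m]
    (hv₀ : (G.induce {u | u ≠ v₀}).IsAcyclic) :
    dpColorFunction G m = m * ⨅ x : V → Fin m, (avoidingColorings G v₀ x).ncard := by
  refine le_antisymm ?_ (le_csInf ⟨_, permutationCover G 1, isDPCover_permutationCover 1, rfl⟩ ?_)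
  · obtain ⟨b, hb⟩ := Nat.sInf_mem (Set.range_nonempty fun x : V → Fin m =>
      (avoidingColorings G v₀ x).ncard)
    refine Nat.sInf_le ⟨starCover G v₀ 1 fun u => Equiv.addRight (b u),
      isDPCover_permutationCover _, ?_⟩
    have ncard_shift (c : Fin m) :
        (avoidingColorings G v₀ fun u => Equiv.addRight (b u) c).ncard =
          (avoidingColorings G v₀ b).ncard :=
      ncard_avoidingColorings_comp (Equiv.addLeft c) b
    simp only [coverColorings_starCover, ncard_shift, Finset.sum_const, Finset.card_univ,
      Fintype.card_fin, smul_eq_mul]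
    rw [iInf, ← hb]
  · rintro _ ⟨H, hH, rfl⟩
    obtain ⟨τ, y, hle⟩ := hH.exists_le_starCover hv₀
    calc m * ⨅ x : V → Fin m, (avoidingColorings G v₀ x).ncard
        = ∑ _c : Fin m, ⨅ x : V → Fin m, (avoidingColorings G v₀ x).ncard := by simp
      _ ≤ ∑ c, (avoidingColorings G v₀ fun u => y u c).ncard :=
          Finset.sum_le_sum fun c _ => ciInf_le' _ _
      _ = coverColorings m (starCover G v₀ τ y) := (coverColorings_starCover τ y).symm
      _ ≤ coverColorings m H := coverColorings_anti hle

end Cover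

/-- Theorem 1.5: if `G` has a feedback vertex set of size one, then its DP color
function eventually agrees with a polynomial. -/
theorem stmt_15 {V : Type*} [Fintype V] (G : SimpleGraph V)
    (v₀ : V) (hv₀ : (SimpleGraph.induce {u : V | u ≠ v₀} G).IsAcyclic) :
    ∃ (N : ℕ) (p : Polynomial ℤ), ∀ m : ℕ, N ≤ m →
      (dpColorFunction G m : ℤ) = p.eval (m : ℤ) := by
  choose p hp using exists_polynomial_ncard_avoidingColorings G v₀
  obtain ⟨r, hr⟩ := exists_eventually_forall_eval_natCast_le p
  obtain ⟨N, hN⟩ := eventually_atTop.mp <| hr.and <|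
    (eventually_ge_atTop 1).and (eventually_ge_atTop (Nat.card (Quotient r)))
  refine ⟨N, X * p r, fun m hm => ?_⟩
  obtain ⟨r_min, m_pos, hrm⟩ := hN m hm
  have : NeZero m := ⟨Nat.one_le_iff_ne_zero.mp m_pos⟩
  have hcard (x : V → Fin m) :
      ((avoidingColorings G v₀ x).ncard : ℤ) = (p (Setoid.ker x)).eval (m : ℤ) := by
    simpa using hp _ (Fin m) x rfl
  obtain ⟨b, rfl⟩ := exists_ker_eq_of_card_quotient_le (C := Fin m) r (by simpa using hrm)
  have b_min (x : V → Fin m) :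
      (avoidingColorings G v₀ b).ncard ≤ (avoidingColorings G v₀ x).ncard := by
    exact_mod_cast (hcard b).trans_le ((r_min _).trans_eq (hcard x).symm)
  rw [dpColorFunction_eq_mul_iInf_ncard hv₀, le_antisymm (ciInf_le' _ b) (le_ciInf b_min),
    Nat.cast_mul, hcard b, eval_mul, eval_X]
end

section
/- Let G = Θ(l₁,…,l_k) be a generalized theta graph with k ≥ 2 internally disjoint paths of lengths l₁,…,l_k between two end vertices, where l₂ ≤ ⋯ ≤ l_k and l₂ ≥ max{l₁, 2}. If there exists j ∈ {2,…,k} such that l₁ and l_j have the same parity, then there is N ∈ ℕ such that P_DP(G, m) < P(G, m) for all m ≥ N. -/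
/-- Vertex type of the generalized theta graph: two end vertices plus, for
each path `i`, `l i - 1` internal vertices. -/
abbrev ThetaVertexType (k : ℕ) (l : Fin k → ℕ) : Type :=
  Fin 2 ⊕ (Σ i : Fin k, Fin (l i - 1))

/-- The `j`-th vertex along the `i`-th path of the generalized theta graph
(`j = 0` is the end vertex `u`, `j = l i` is the end vertex `w`). -/
def thetaVert (k : ℕ) (l : Fin k → ℕ) (i : Fin k) (j : ℕ) : ThetaVertexType k l :=
  if hj : j = 0 then Sum.inl 0
  else if h : j < l i then Sum.inr ⟨i, ⟨j - 1, by omega⟩⟩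
  else Sum.inl 1

/-- The generalized theta graph `Θ(l 0, …, l (k-1))`: two end vertices joined by
`k` internally disjoint paths, the `i`-th of which has `l i` edges. -/
def thetaGraph (k : ℕ) (l : Fin k → ℕ) : SimpleGraph (ThetaVertexType k l) :=
  SimpleGraph.fromEdgeSet
    {e | ∃ (i : Fin k) (j : ℕ), j < l i ∧ e = s(thetaVert k l i j, thetaVert k l i (j + 1))}

/-- Number of proper colorings of `G` with `m` colors. -/
noncomputable def properCount {V : Type*} (G : SimpleGraph V) (m : ℕ) : ℕ :=
  Nat.card {f : V → Fin m // ∀ u v : V, G.Adj u v → f u ≠ f v}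


/-!
A path with `n` edges whose end colors `a`, `b` are prescribed has `c n + [a = b] (-1) ^ n` proper
`m`-colorings, where `c n = ((m - 1) ^ n - (-1) ^ n) / m`. Match the lists along the last edge of
path `j` by a permutation without fixed points, and all other lists by the identity. The ends of
path `j` then never look equal when those of the other paths do, and comparing the counts gives
`P(G, m) - P(G, H) = m (-1) ^ l j (∏_{i ≠ j} (c (l i) + (-1) ^ l i) - ∏_{i ≠ j} c (l i))`.
Because `c` grows by a factor of at least `m - 2`, for large `m` the sign of the difference of the
products is the one added in the smallest factor. That factor belongs to the shortest path, so by
the parity assumption this sign is `(-1) ^ l j`.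
-/

section PathColorings

variable {α : Type*} {n : ℕ}

/-- The colors `a, g 0, …, g (n - 1), b` along a path with `n` inner vertices. It is extended to
`ℕ` by the constant value `b` so that edges can be indexed by natural numbers. -/
def pathSeq (a : α) (g : Fin n → α) (b : α) : ℕ → α
  | 0 => a
  | t + 1 => if h : t < n then g ⟨t, h⟩ else b

/-- `g` colors the inner vertices of a path with end colors `a` and `b` so that the whole path is
properly colored. -/
def IsPathColoring (a : α) (g : Fin n → α) (b : α) : Prop :=
  ∀ t < n + 1, pathSeq a g b t ≠ pathSeq a g b (t + 1)

lemma isPathColoring_zero (a : α) (g : Fin 0 → α) (b : α) : IsPathColoring a g b ↔ a ≠ b := by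
  simp [IsPathColoring, pathSeq]

lemma pathSeq_cons_succ (a c : α) (g : Fin n → α) (b : α) (t : ℕ) :
    pathSeq a (Fin.cons c g : Fin (n + 1) → α) b (t + 1) = pathSeq c g b t := by
  cases t <;> simp [pathSeq, Fin.cons]

lemma isPathColoring_cons (a c : α) (g : Fin n → α) (b : α) :
    IsPathColoring a (Fin.cons c g : Fin (n + 1) → α) b ↔ a ≠ c ∧ IsPathColoring c g b := by
  simp only [IsPathColoring, Nat.forall_lt_succ_left (n := n + 1), pathSeq_cons_succ]
  rfl

variable [Fintype α] [DecidableEq α]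

lemma card_isPathColoring_succ (n : ℕ) (a b : α) :
    Nat.card {g : Fin (n + 1) → α // IsPathColoring a g b} =
      ∑ c ∈ Finset.univ.erase a, Nat.card {g : Fin n → α // IsPathColoring c g b} := by
  have splitFirst : {g : Fin (n + 1) → α // IsPathColoring a g b} ≃
      Σ c, {g : Fin n → α // a ≠ c ∧ IsPathColoring c g b} :=
    ((Fin.consEquiv fun _ => α).subtypeEquiv fun p =>
      (isPathColoring_cons a p.1 p.2 b).symm).symm.trans
        (Equiv.subtypeProdEquivSigmaSubtype fun c g => a ≠ c ∧ IsPathColoring c g b)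
  rw [Nat.card_congr splitFirst, Nat.card_sigma, ← Finset.add_sum_erase _ _ (Finset.mem_univ a)]
  have no_repeat : Nat.card {g : Fin n → α // a ≠ a ∧ IsPathColoring a g b} = 0 := by simp
  rw [no_repeat, zero_add]
  refine Finset.sum_congr rfl fun c hc => ?_
  simp [(Finset.ne_of_mem_erase hc).symm]

/-- The number of proper `m`-colorings of a path with `n` edges whose end colors are prescribed and
distinct, that is `((m - 1) ^ n - (-1) ^ n) / m`. -/
def pathColoringCount {R : Type*} [CommRing R] (m : R) : ℕ → R
  | 0 => 0
  | n + 1 => (m - 1) * pathColoringCount m n + (-1) ^ n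

lemma card_isPathColoring {R : Type*} [CommRing R] (n : ℕ) (a b : α) :
    (Nat.card {g : Fin n → α // IsPathColoring a g b} : R) =
      pathColoringCount (Fintype.card α : R) (n + 1) + if a = b then (-1) ^ (n + 1) else 0 := by
  induction n generalizing a with
  | zero =>
    rw [Nat.card_congr (Equiv.subtypeEquivRight fun g => isPathColoring_zero a g b)]
    by_cases hab : a = b <;> simp [hab, pathColoringCount]
  | succ n ih =>
    rw [card_isPathColoring_succ, Nat.cast_sum, pathColoringCount]
    simp only [ih, Finset.sum_erase_eq_sub (Finset.mem_univ a), Finset.sum_add_distrib,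
      Finset.sum_const, Finset.card_univ, nsmul_eq_mul, Finset.sum_ite_eq', Finset.mem_univ,
      if_true]
    split_ifs <;> ring

end PathColorings

section Growth

variable {R : Type*} [CommRing R] [LinearOrder R] [IsStrictOrderedRing R] {m : R}

-- The second quantity counts the proper colorings whose two end colors are prescribed and equal.
lemma pathColoringCount_nonneg_and_add_nonneg (hm : 2 ≤ m) (n : ℕ) :
    0 ≤ pathColoringCount m n ∧ 0 ≤ pathColoringCount m n + (-1) ^ n := by
  induction n with
  | zero => simp [pathColoringCount]
  | succ n ih =>
    have closed : pathColoringCount m (n + 1) + (-1) ^ (n + 1) =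
        (m - 1) * pathColoringCount m n := by
      rw [pathColoringCount]; ring
    have opened : pathColoringCount m (n + 1) =
        (m - 2) * pathColoringCount m n + (pathColoringCount m n + (-1) ^ n) := by
      rw [pathColoringCount]; ring
    rw [closed, opened]
    exact ⟨add_nonneg (mul_nonneg (by linarith) ih.1) ih.2, mul_nonneg (by linarith) ih.1⟩

lemma mul_pathColoringCount_le_succ (hm : 2 ≤ m) (n : ℕ) :
    (m - 2) * pathColoringCount m n ≤ pathColoringCount m (n + 1) := by
  have h := (pathColoringCount_nonneg_and_add_nonneg hm n).2
  rw [pathColoringCount]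
  linarith

lemma monotone_pathColoringCount (hm : 3 ≤ m) : Monotone (pathColoringCount m) :=
  monotone_nat_of_le_succ fun n =>
    (le_mul_of_one_le_left (pathColoringCount_nonneg_and_add_nonneg (by linarith) n).1
      (by linarith)).trans (mul_pathColoringCount_le_succ (by linarith) n)

lemma one_le_pathColoringCount (hm : 3 ≤ m) {n : ℕ} (hn : 1 ≤ n) : 1 ≤ pathColoringCount m n :=
  calc (1 : R) = pathColoringCount m 1 := by simp [pathColoringCount]
    _ ≤ pathColoringCount m n := monotone_pathColoringCount hm hn

lemma mul_pathColoringCount_le (hm : 3 ≤ m) {n n' : ℕ} (h : n < n') :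
    (m - 2) * pathColoringCount m n ≤ pathColoringCount m n' :=
  (mul_pathColoringCount_le_succ (by linarith) n).trans (monotone_pathColoringCount hm h)

lemma mul_pathColoringCount_add_one_le {N : R} (hN : 1 ≤ N) (hm : 2 * (N + 1) ≤ m) {n n' : ℕ}
    (hn : 1 ≤ n) (h : n < n') :
    N * (pathColoringCount m n + 1) ≤ pathColoringCount m n' := by
  have one_le := one_le_pathColoringCount (show 3 ≤ m by linarith) hn
  calc N * (pathColoringCount m n + 1)
    _ ≤ N * (2 * pathColoringCount m n) := mul_le_mul_of_nonneg_left (by linarith) (by linarith)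
    _ = 2 * N * pathColoringCount m n := by ring
    _ ≤ (m - 2) * pathColoringCount m n := mul_le_mul_of_nonneg_right (by linarith) (by linarith)
    _ ≤ pathColoringCount m n' := mul_pathColoringCount_le (by linarith) h

end Growth

section ProductInequalities

variable {ι : Type*}

lemma one_sub_card_mul_mul_prod_le_prod {R : Type*} [CommRing R] [LinearOrder R]
    [IsStrictOrderedRing R] (s : Finset ι) (x y : ι → R) {δ : R} (hδ : δ ≤ 1)
    (hx : ∀ i ∈ s, 0 ≤ x i) (hxy : ∀ i ∈ s, (1 - δ) * x i ≤ y i) :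
    (1 - s.card * δ) * ∏ i ∈ s, x i ≤ ∏ i ∈ s, y i :=
  calc (1 - s.card * δ) * ∏ i ∈ s, x i
    _ = (1 + s.card * -δ) * ∏ i ∈ s, x i := by ring
    _ ≤ (1 + -δ) ^ s.card * ∏ i ∈ s, x i :=
      mul_le_mul_of_nonneg_right (one_add_mul_le_pow (by linarith) _) (Finset.prod_nonneg hx)
    _ = ∏ i ∈ s, (1 - δ) * x i := by
      rw [Finset.prod_mul_distrib, Finset.prod_const, sub_eq_add_neg]
    _ ≤ ∏ i ∈ s, y i :=
      Finset.prod_le_prod (fun i hi => mul_nonneg (by linarith) (hx i hi)) hxy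

variable {K : Type*} [Field K] [LinearOrder K] [IsStrictOrderedRing K]

-- Decreasing a large `x i` by `1` costs a relative loss of at most
-- `D⁻¹ = 1 / ((#s + 1) * (c + 1))`, so more than the fraction `c / (c + 1)` of the product is kept.
lemma mul_prod_lt_add_one_mul_prod (s : Finset ι) (x y : ι → K) {c : K} (hc : 0 ≤ c)
    (hx : ∀ i ∈ s, 0 ≤ x i) (hy : ∀ i ∈ s, 0 < y i) (hxy : ∀ i ∈ s, x i - 1 ≤ y i)
    (hbig : ∀ i ∈ s, y i < x i → (s.card + 1) * (c + 1) ≤ x i) :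
    c * ∏ i ∈ s, x i < (c + 1) * ∏ i ∈ s, y i := by
  set D : K := (s.card + 1) * (c + 1) with hD
  have one_le_D : 1 ≤ D := one_le_mul_of_one_le_of_one_le (by simp) (by simpa)
  have D_pos : 0 < D := by linarith
  have relative_loss : ∀ i ∈ s, (1 - D⁻¹) * x i ≤ y i := fun i hi => by
    rcases lt_or_ge (y i) (x i) with h | h
    · have : 1 ≤ D⁻¹ * x i := (one_le_inv_mul₀ D_pos).2 (hbig i hi h)
      linarith [hxy i hi]
    · have : 0 ≤ D⁻¹ * x i := mul_nonneg (by positivity) (hx i hi)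
      linarith
  have bernoulli :=
    one_sub_card_mul_mul_prod_le_prod s x y (inv_le_one_of_one_le₀ one_le_D) hx relative_loss
  have gain : c < (c + 1) * (1 - s.card * D⁻¹) := by
    have : (c + 1) * (1 - s.card * D⁻¹) = c + (s.card + 1 : K)⁻¹ := by
      have : (s.card + 1 : K) ≠ 0 := by positivity
      have : c + 1 ≠ 0 := by positivity
      rw [hD]; field_simp; ring
    rw [this]
    exact lt_add_of_pos_right c (by positivity)
  rcases (Finset.prod_nonneg hx).eq_or_lt with h | h
  · rw [← h, mul_zero]
    exact mul_pos (by linarith) (Finset.prod_pos hy)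
  · calc c * ∏ i ∈ s, x i < (c + 1) * (1 - s.card * D⁻¹) * ∏ i ∈ s, x i :=
          mul_lt_mul_of_pos_right gain h
      _ = (c + 1) * ((1 - s.card * D⁻¹) * ∏ i ∈ s, x i) := mul_assoc ..
      _ ≤ (c + 1) * ∏ i ∈ s, y i := mul_le_mul_of_nonneg_left bernoulli (by linarith)

lemma prod_lt_prod_of_add_one_le {s : Finset ι} {x y : ι → K} {o : ι} (ho : o ∈ s)
    (hx : ∀ i ∈ s, 0 ≤ x i) (hy : ∀ i ∈ s, 0 < y i) (hxy : ∀ i ∈ s, x i - 1 ≤ y i)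
    (hxyo : x o + 1 ≤ y o) (hbig : ∀ i ∈ s, y i < x i → s.card * (x o + 1) ≤ x i) :
    ∏ i ∈ s, x i < ∏ i ∈ s, y i := by
  classical
  have mem {i : ι} (hi : i ∈ s.erase o) : i ∈ s := Finset.mem_of_mem_erase hi
  have card_s : ((s.erase o).card + 1 : K) = s.card := by
    exact_mod_cast Finset.card_erase_add_one ho
  calc ∏ i ∈ s, x i = x o * ∏ i ∈ s.erase o, x i := (Finset.mul_prod_erase s x ho).symm
    _ < (x o + 1) * ∏ i ∈ s.erase o, y i :=
      mul_prod_lt_add_one_mul_prod (s.erase o) x y (hx o ho) (fun i hi => hx i (mem hi))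
        (fun i hi => hy i (mem hi)) (fun i hi => hxy i (mem hi))
        fun i hi h => card_s ▸ hbig i (mem hi) h
    _ ≤ y o * ∏ i ∈ s.erase o, y i :=
      mul_le_mul_of_nonneg_right hxyo (Finset.prod_nonneg fun i hi => (hy i (mem hi)).le)
    _ = ∏ i ∈ s, y i := Finset.mul_prod_erase s y ho

lemma sign_mul_prod_add_sign_sub_prod_pos {s : Finset ι} {y ε : ι → K} {o : ι}
    (ho : o ∈ s) (hε : ∀ i ∈ s, ε i = 1 ∨ ε i = -1) (hy : ∀ i ∈ s, 1 ≤ y i)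
    (hbig : ∀ i ∈ s, ε i ≠ ε o → s.card * (y o + 1) ≤ y i) :
    0 < ε o * (∏ i ∈ s, (y i + ε i) - ∏ i ∈ s, y i) := by
  have one_le_card : (1 : K) ≤ s.card := by exact_mod_cast Finset.card_pos.2 ⟨o, ho⟩
  have neg_one_le (i) (hi : i ∈ s) : -1 ≤ ε i := by rcases hε i hi with h | h <;> simp [h]
  have le_one (i) (hi : i ∈ s) : ε i ≤ 1 := by rcases hε i hi with h | h <;> simp [h]
  have y_pos (i) (hi : i ∈ s) : 0 < y i := zero_lt_one.trans_le (hy i hi)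
  have hyo := hy o ho
  rcases hε o ho with hεo | hεo
  · have sum_pos (i) (hi : i ∈ s) : 0 < y i + ε i := by
      by_cases h : ε i = ε o
      · linarith [y_pos i hi]
      · nlinarith [hbig i hi h, neg_one_le i hi]
    have increasing : ∏ i ∈ s, y i < ∏ i ∈ s, (y i + ε i) :=
      prod_lt_prod_of_add_one_le ho (fun i hi => (y_pos i hi).le) sum_pos
        (fun i hi => by linarith [neg_one_le i hi]) (by rw [hεo])
        fun i hi h => hbig i hi fun heq => by linarith
    rwa [hεo, one_mul, sub_pos]
  · have decreasing : ∏ i ∈ s, (y i + ε i) < ∏ i ∈ s, y i :=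
      prod_lt_prod_of_add_one_le ho (fun i hi => by linarith [hy i hi, neg_one_le i hi]) y_pos
        (fun i hi => by linarith [le_one i hi]) (by rw [hεo, neg_add_cancel_right])
        fun i hi h => by nlinarith [hbig i hi fun heq => by linarith]
    rwa [hεo, neg_one_mul, neg_sub, sub_pos]

lemma neg_one_pow_mul_prod_pathColoringCount_pos {s : Finset ι} {l : ι → ℕ} {o : ι} {m : K}
    (ho : o ∈ s) (hlo : 1 ≤ l o) (hmin : ∀ i ∈ s, l o ≤ l i) (hm : 2 * (s.card + 1) ≤ m) :
    0 < (-1) ^ l o * (∏ i ∈ s, (pathColoringCount m (l i) + (-1) ^ l i) -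
      ∏ i ∈ s, pathColoringCount m (l i)) := by
  have one_le_card : (1 : K) ≤ s.card := by exact_mod_cast Finset.card_pos.2 ⟨o, ho⟩
  refine sign_mul_prod_add_sign_sub_prod_pos (ε := fun i => (-1) ^ l i) ho
    (fun i _ => neg_one_pow_eq_or K (l i))
    (fun i hi => one_le_pathColoringCount (by linarith) (hlo.trans (hmin i hi)))
    fun i hi hne => ?_
  have longer : l o < l i := (hmin i hi).lt_of_ne fun h => hne (by simp only [h])
  exact mul_pathColoringCount_add_one_le one_le_card hm hlo longer

end ProductInequalities

section PermutationCovers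

variable {V : Type*} (G : SimpleGraph V)

/-- `f` colors `G` so that each edge `uv` avoids the color pairs matched by `T u v`. For `T = 1`
these are the proper colorings. -/
def IsTwistedColoring {α : Type*} (T : V → V → Equiv.Perm α) (f : V → α) : Prop :=
  ∀ u v, G.Adj u v → f u ≠ T u v (f v)

lemma properCount_eq_card_isTwistedColoring_one (m : ℕ) :
    properCount G m = Nat.card {f : V → Fin m // IsTwistedColoring G 1 f} :=
  rfl

variable {m : ℕ} (T : V → V → Equiv.Perm (Fin m)) (hT : ∀ u v, T v u = (T u v)⁻¹)

/-- The cover of `G` in which the lists of adjacent `u` and `v` are perfectly matched by `T u v`. -/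
def permCover : SimpleGraph (V × Fin m) where
  Adj x y := (x.1 = y.1 ∧ x.2 ≠ y.2) ∨ (G.Adj x.1 y.1 ∧ x.2 = T x.1 y.1 y.2)
  symm := ⟨by
    rintro x y (⟨h, h'⟩ | ⟨h, h'⟩)
    · exact Or.inl ⟨h.symm, h'.symm⟩
    · exact Or.inr ⟨h.symm, by rw [hT x.1 y.1, h']; simp⟩⟩
  loopless := ⟨by
    rintro x (⟨-, h⟩ | ⟨h, -⟩)
    · exact h rfl
    · exact G.irrefl h⟩

lemma permCover_adj_of_ne {u v : V} (huv : u ≠ v) (a b : Fin m) :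
    (permCover G T hT).Adj (u, a) (v, b) ↔ G.Adj u v ∧ a = T u v b := by
  simp [permCover, huv]

lemma isDPCover_permCover : IsDPCover G m (permCover G T hT) where
  listClique _ _ _ hab := Or.inl ⟨rfl, hab⟩
  cross u v a b huv h := ((permCover_adj_of_ne G T hT huv a b).1 h).1
  matching₁ u v a b b' huv h h' := by
    rw [permCover_adj_of_ne G T hT huv] at h h'
    exact (T u v).injective (h.2.symm.trans h'.2)
  matching₂ u v a a' b huv h h' := by
    rw [permCover_adj_of_ne G T hT huv] at h h'
    exact h.2.trans h'.2.symm

lemma coverColorings_permCover :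
    coverColorings m (permCover G T hT) = Nat.card {f : V → Fin m // IsTwistedColoring G T f} := by
  refine Nat.card_congr (Equiv.subtypeEquivRight fun f => forall₂_congr fun u v => ?_)
  rcases eq_or_ne u v with rfl | huv
  · simp
  · simp [permCover_adj_of_ne G T hT huv]

include hT in
lemma dpColorFunction_le_card_isTwistedColoring :
    dpColorFunction G m ≤ Nat.card {f : V → Fin m // IsTwistedColoring G T f} :=
  Nat.sInf_le
    ⟨permCover G T hT, isDPCover_permCover G T hT, (coverColorings_permCover G T hT).symm⟩

end PermutationCovers

section TwistedTheta

variable {k : ℕ} {l : Fin k → ℕ} {i : Fin k} {t : ℕ} {α : Type*}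

lemma thetaVert_zero : thetaVert k l i 0 = Sum.inl 0 :=
  rfl

lemma thetaVert_length (hl : 1 ≤ l i) : thetaVert k l i (l i) = Sum.inl 1 := by
  simp [thetaVert, Nat.ne_zero_of_lt hl]

lemma thetaVert_succ_of_lt (ht : t < l i - 1) :
    thetaVert k l i (t + 1) = Sum.inr ⟨i, t, ht⟩ := by
  simp [thetaVert, Nat.add_lt_of_lt_sub ht]

lemma thetaVert_ne_succ (ht : t < l i) : thetaVert k l i t ≠ thetaVert k l i (t + 1) := by
  unfold thetaVert
  split_ifs <;> simp <;> omega

lemma thetaGraph_adj_iff {u v : ThetaVertexType k l} :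
    (thetaGraph k l).Adj u v ↔ ∃ (i : Fin k) (t : ℕ), t < l i ∧
      ((u = thetaVert k l i t ∧ v = thetaVert k l i (t + 1)) ∨
        (u = thetaVert k l i (t + 1) ∧ v = thetaVert k l i t)) := by
  simp only [thetaGraph, SimpleGraph.fromEdgeSet_adj, Set.mem_ofPred_eq, Sym2.eq_iff]
  refine and_iff_left_of_imp ?_ |>.trans (by rfl)
  rintro ⟨i, t, ht, ⟨rfl, rfl⟩ | ⟨rfl, rfl⟩⟩
  · exact thetaVert_ne_succ ht
  · exact (thetaVert_ne_succ ht).symm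

lemma isTwistedColoring_thetaGraph_iff {T : ThetaVertexType k l → ThetaVertexType k l →
    Equiv.Perm α} (hT : ∀ u v, T v u = (T u v)⁻¹) (f : ThetaVertexType k l → α) :
    IsTwistedColoring (thetaGraph k l) T f ↔ ∀ i, ∀ t < l i, f (thetaVert k l i t) ≠
      T (thetaVert k l i t) (thetaVert k l i (t + 1)) (f (thetaVert k l i (t + 1))) := by
  refine ⟨fun h i t ht => h _ _ (thetaGraph_adj_iff.2 ⟨i, t, ht, .inl ⟨rfl, rfl⟩⟩),
    fun h u v huv => ?_⟩
  obtain ⟨i, t, ht, ⟨rfl, rfl⟩ | ⟨rfl, rfl⟩⟩ := thetaGraph_adj_iff.1 huv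
  · exact h i t ht
  · rw [hT (thetaVert k l i t), Ne, Equiv.Perm.eq_inv_iff_eq]
    exact (h i t ht).symm

/-- The permutations which twist the last edge of each path `i` by `τ i` and no other edge. A path
of length one has no inner vertex, so its edge is never twisted. -/
def lastEdgeTwist (τ : Fin k → Equiv.Perm α) :
    ThetaVertexType k l → ThetaVertexType k l → Equiv.Perm α
  | .inr x, .inl e => if e = 1 then τ x.1 else 1
  | .inl e, .inr x => if e = 1 then (τ x.1)⁻¹ else 1
  | _, _ => 1

lemma lastEdgeTwist_swap (τ : Fin k → Equiv.Perm α) (u v : ThetaVertexType k l) :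
    lastEdgeTwist τ v u = (lastEdgeTwist τ u v)⁻¹ := by
  rcases u with u | u <;> rcases v with v | v <;> simp only [lastEdgeTwist, inv_one] <;>
    split_ifs <;> simp

lemma lastEdgeTwist_one : (lastEdgeTwist 1 : ThetaVertexType k l → ThetaVertexType k l →
    Equiv.Perm α) = 1 := by
  funext u v
  rcases u with u | u <;> rcases v with v | v <;> simp [lastEdgeTwist]

lemma lastEdgeTwist_thetaVert {τ : Fin k → Equiv.Perm α} (hτ : l i = 1 → τ i = 1) (ht : t < l i) :
    lastEdgeTwist τ (thetaVert k l i t) (thetaVert k l i (t + 1)) =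
      if t + 1 = l i then τ i else 1 := by
  split_ifs with hlast
  · rw [hlast, thetaVert_length (by omega)]
    rcases t with _ | t
    · rw [hτ hlast.symm, thetaVert_zero]
      rfl
    · rw [thetaVert_succ_of_lt (by omega)]
      rfl
  · rw [thetaVert_succ_of_lt (by omega)]
    rcases t with _ | t
    · rfl
    · rw [thetaVert_succ_of_lt (by omega)]
      rfl

-- A twist of the last edge amounts to the path seeing the color of its end vertex permuted.
lemma pathSeq_eq_apply_thetaVert (σ : Equiv.Perm α) (f : ThetaVertexType k l → α) (hl : 1 ≤ l i)
    (ht : t ≤ l i) :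
    pathSeq (f (Sum.inl 0)) (fun q => f (Sum.inr ⟨i, q⟩)) (σ (f (Sum.inl 1))) t =
      (if t = l i then σ else 1) (f (thetaVert k l i t)) := by
  rcases t with _ | t
  · rw [if_neg (by omega)]
    rfl
  by_cases hlast : t + 1 = l i
  · rw [if_pos hlast, pathSeq, dif_neg (by omega), hlast, thetaVert_length hl]
  · rw [if_neg hlast, thetaVert_succ_of_lt (by omega), pathSeq, dif_pos (by omega)]
    rfl

lemma isTwistedColoring_lastEdgeTwist_iff {τ : Fin k → Equiv.Perm α} (hl : ∀ i, 1 ≤ l i)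
    (hτ : ∀ i, l i = 1 → τ i = 1) (f : ThetaVertexType k l → α) :
    IsTwistedColoring (thetaGraph k l) (lastEdgeTwist τ) f ↔
      ∀ i, IsPathColoring (f (Sum.inl 0)) (fun q => f (Sum.inr ⟨i, q⟩)) (τ i (f (Sum.inl 1))) := by
  rw [isTwistedColoring_thetaGraph_iff (lastEdgeTwist_swap τ)]
  refine forall_congr' fun i => ?_
  rw [IsPathColoring, Nat.sub_add_cancel (hl i)]
  refine forall₂_congr fun t ht => ?_
  rw [pathSeq_eq_apply_thetaVert _ _ (hl i) ht.le, pathSeq_eq_apply_thetaVert _ _ (hl i) ht,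
    lastEdgeTwist_thetaVert (hτ i) ht, if_neg ht.ne, Equiv.Perm.one_apply]

/-- A vertex coloring of a theta graph whose restriction to each path `i` is a path coloring
consists of the colors of the two ends and one path coloring for each path. The color of the second
end is read through `τ i`. -/
def thetaPathColoringEquiv (τ : Fin k → α → α) :
    {f : ThetaVertexType k l → α //
      ∀ i, IsPathColoring (f (Sum.inl 0)) (fun q => f (Sum.inr ⟨i, q⟩)) (τ i (f (Sum.inl 1)))} ≃
      Σ ab : α × α, ∀ i, {g : Fin (l i - 1) → α // IsPathColoring ab.1 g (τ i ab.2)} where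
  toFun f := ⟨(f.1 (Sum.inl 0), f.1 (Sum.inl 1)), fun i => ⟨fun q => f.1 (Sum.inr ⟨i, q⟩), f.2 i⟩⟩
  invFun x := ⟨Sum.elim ![x.1.1, x.1.2] fun iq => (x.2 iq.1).1 iq.2, fun i => (x.2 i).2⟩
  left_inv f := by
    ext (e | v)
    · fin_cases e <;> rfl
    · rfl
  right_inv _ := rfl

variable [Fintype α] {R : Type*} [CommRing R]

lemma card_isTwistedColoring_lastEdgeTwist [DecidableEq α] (τ : Fin k → Equiv.Perm α)
    (hl : ∀ i, 1 ≤ l i) (hτ : ∀ i, l i = 1 → τ i = 1) :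
    (Nat.card {f // IsTwistedColoring (thetaGraph k l) (lastEdgeTwist τ) f} : R) =
      ∑ b : α, ∑ a : α, ∏ i, (pathColoringCount (Fintype.card α : R) (l i) +
        if a = τ i b then (-1) ^ l i else 0) := by
  rw [Nat.card_congr ((Equiv.subtypeEquivRight (isTwistedColoring_lastEdgeTwist_iff hl hτ)).trans
    (thetaPathColoringEquiv fun i => τ i)), Nat.card_sigma, Fintype.sum_prod_type_right]
  push_cast [Nat.card_pi, card_isPathColoring]
  simp only [Nat.sub_add_cancel (hl _)]

lemma card_isTwistedColoring_lastEdgeTwist_mulSingle [DecidableEq α] {j : Fin k}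
    (hl : ∀ i, 1 ≤ l i) (hj : 2 ≤ l j) (σ : Equiv.Perm α) :
    (Nat.card {f // IsTwistedColoring (thetaGraph k l) (lastEdgeTwist (Pi.mulSingle j σ)) f} : R) =
      ∑ b : α, ∑ a : α,
        (pathColoringCount (Fintype.card α : R) (l j) + if a = σ b then (-1) ^ l j else 0) *
          ∏ i ∈ Finset.univ.erase j,
            (pathColoringCount (Fintype.card α : R) (l i) + if a = b then (-1) ^ l i else 0) := by
  have untwisted {i : Fin k} (hij : i ≠ j) :
      (Pi.mulSingle j σ : Fin k → Equiv.Perm α) i = 1 :=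
    Pi.mulSingle_eq_of_ne (M := fun _ => Equiv.Perm α) hij σ
  rw [card_isTwistedColoring_lastEdgeTwist _ hl fun i hi => untwisted (by rintro rfl; omega)]
  refine Finset.sum_congr rfl fun b _ => Finset.sum_congr rfl fun a _ => ?_
  rw [← Finset.mul_prod_erase _ _ (Finset.mem_univ j), Pi.mulSingle_eq_same]
  congr 1
  refine Finset.prod_congr rfl fun i hi => ?_
  rw [untwisted (Finset.ne_of_mem_erase hi), Equiv.Perm.one_apply]

-- Twisting path `j` moves the correction term `(-1) ^ l j` from the diagonal `a = b`, where all
-- other paths carry theirs as well, to `a = σ b`, where none of them does.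
lemma card_isTwistedColoring_one_sub_mulSingle {j : Fin k} {σ : Equiv.Perm α} (hσ : ∀ b, σ b ≠ b)
    (hl : ∀ i, 1 ≤ l i) (hj : 2 ≤ l j) :
    (Nat.card {f : _ → α // IsTwistedColoring (thetaGraph k l) 1 f} : R) -
      Nat.card {f // IsTwistedColoring (thetaGraph k l) (lastEdgeTwist (Pi.mulSingle j σ)) f} =
    Fintype.card α * ((-1) ^ l j *
      (∏ i ∈ Finset.univ.erase j, (pathColoringCount (Fintype.card α : R) (l i) + (-1) ^ l i) -
        ∏ i ∈ Finset.univ.erase j, pathColoringCount (Fintype.card α : R) (l i))) := by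
  classical
  set c : ℕ → R := pathColoringCount (Fintype.card α : R)
  set others : α → α → R := fun a b =>
    ∏ i ∈ Finset.univ.erase j, (c (l i) + if a = b then (-1) ^ l i else 0)
  have split_sum (ρ : Equiv.Perm α) (b : α) :
      ∑ a, (c (l j) + if a = ρ b then (-1) ^ l j else 0) * others a b =
        c (l j) * ∑ a, others a b + (-1) ^ l j * others (ρ b) b := by
    simp [add_mul, Finset.sum_add_distrib, Finset.mul_sum]
  have twisted_count (ρ : Equiv.Perm α) :
      (Nat.card {f // IsTwistedColoring (thetaGraph k l) (lastEdgeTwist (Pi.mulSingle j ρ)) f} : R)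
        = ∑ b, c (l j) * ∑ a, others a b + ∑ b, (-1) ^ l j * others (ρ b) b := by
    rw [card_isTwistedColoring_lastEdgeTwist_mulSingle hl hj, ← Finset.sum_add_distrib]
    exact Finset.sum_congr rfl fun b _ => split_sum ρ b
  rw [← lastEdgeTwist_one, ← Pi.mulSingle_one j, twisted_count, twisted_count,
    add_sub_add_left_eq_sub]
  simp [others, hσ, mul_sub]

end TwistedTheta

theorem stmt_16_general {k : ℕ} {l : Fin k → ℕ} {o j : Fin k} (ho : 1 ≤ l o)
    (hmin : ∀ i, l o ≤ l i) (hoj : o ≠ j) (hj : 2 ≤ l j) (hpar : l o % 2 = l j % 2) {m : ℕ}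
    (hm : 2 * k ≤ m) :
    dpColorFunction (thetaGraph k l) m < properCount (thetaGraph k l) m := by
  have hl (i : Fin k) : 1 ≤ l i := ho.trans (hmin i)
  have two_le_m : 2 ≤ m := by
    have := o.pos
    omega
  obtain ⟨σ, hσ⟩ : ∃ σ : Equiv.Perm (Fin m), ∀ b, σ b ≠ b := by
    obtain ⟨m, rfl⟩ := Nat.exists_eq_add_of_le' two_le_m
    exact ⟨Equiv.addRight 1, by simp⟩
  have card_others : ((Finset.univ.erase j).card : ℚ) + 1 = k := by
    exact_mod_cast (Finset.card_erase_add_one (Finset.mem_univ j)).trans (Finset.card_fin k)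
  have sign_eq : (-1 : ℚ) ^ l j = (-1) ^ l o := by
    rw [neg_one_pow_eq_pow_mod_two, ← hpar, ← neg_one_pow_eq_pow_mod_two]
  have sign_pos := neg_one_pow_mul_prod_pathColoringCount_pos (m := (m : ℚ))
    (Finset.mem_erase_of_ne_of_mem hoj (Finset.mem_univ o)) ho (fun i _ => hmin i)
    (by rw [card_others]; exact_mod_cast hm)
  have count_sub := card_isTwistedColoring_one_sub_mulSingle (R := ℚ) hσ hl hj
  rw [Fintype.card_fin, sign_eq] at count_sub
  have count_lt := mul_pos (show (0 : ℚ) < m by positivity) sign_pos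
  rw [← count_sub, sub_pos, Nat.cast_lt] at count_lt
  rw [properCount_eq_card_isTwistedColoring_one]
  exact (dpColorFunction_le_card_isTwistedColoring _ _ (lastEdgeTwist_swap _)).trans_lt count_lt

/-- Theorem 1.4(i): if some `l j` with `j ≥ 2` has the same parity as `l 1`,
then the DP color function of the generalized theta graph is eventually
strictly smaller than its chromatic polynomial. -/
theorem stmt_16 (k : ℕ) (hk : 2 ≤ k) (l : Fin k → ℕ)
    (h1 : 1 ≤ l ⟨0, by omega⟩)
    (hmono : ∀ i j : Fin k, 1 ≤ i.val → i ≤ j → l i ≤ l j)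
    (h2 : max (l ⟨0, by omega⟩) 2 ≤ l ⟨1, by omega⟩)
    (j : Fin k) (hj : 1 ≤ j.val)
    (hpar : l ⟨0, by omega⟩ % 2 = l j % 2) :
    ∃ N : ℕ, ∀ m : ℕ, N ≤ m →
      dpColorFunction (thetaGraph k l) m < properCount (thetaGraph k l) m := by
  have hlong (i : Fin k) (hi : 1 ≤ i.val) : max (l ⟨0, by omega⟩) 2 ≤ l i :=
    h2.trans (hmono ⟨1, by omega⟩ i le_rfl hi)
  have hmin (i : Fin k) : l ⟨0, by omega⟩ ≤ l i := by
    rcases Nat.eq_zero_or_pos i.val with hi | hi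
    · exact (congrArg l (Fin.ext hi.symm)).le
    · exact (le_max_left _ _).trans (hlong i hi)
  exact ⟨2 * k, fun m => stmt_16_general h1 hmin (Fin.ne_of_lt hj)
    ((le_max_right _ _).trans (hlong j hj)) hpar⟩
end
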